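/- arXiv:2603.17487 — 5 statements merged into one kernel-verified Lean document; each statement's English description precedes it below -/
import Mathlib

section
/- Let q be a complex number and let M(q) be the 6×6 matrix with rows (0, 6q, 0, 0, 24q², 0), (1, 0, 10q, 6q, 0, 24q²), (0, 1, 0, 0, 4q, 0), (0, 1, 0, 0, 2q, 0), (0, 0, 3, 2, 0, 6q), (0, 0, 0, 0, 1, 0). Then the characteristic polynomial of M(q) equals X⁶ − 44q·X⁴ − 16q²·X². -/
open Polynomial

/-- The matrix of small quantum multiplication by the hyperplane class on the
ambient cohomology of a Gushel–Mukai fourfold. -/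
noncomputable def M (q : ℂ) : Matrix (Fin 6) (Fin 6) ℂ :=
  !![0, 6*q, 0,    0,   24*q^2, 0;
     1, 0,   10*q, 6*q, 0,      24*q^2;
     0, 1,   0,    0,   4*q,    0;
     0, 1,   0,    0,   2*q,    0;
     0, 0,   3,    2,   0,      6*q;
     0, 0,   0,    0,   1,      0]

/-!
The hyperplane class has codimension one and the quantum parameter `q` has degree two, so quantum
multiplication by this class interchanges the classes of even and of odd codimension. In a basis
split by parity its matrix is therefore block anti-diagonal, with blocks `A` and `B`, and then its
characteristic polynomial is, up to a power of `X`, that of `B * A` evaluated at `X ^ 2`. There are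
only two odd classes, so `B * A`, the square of the multiplication on them, is a `2 × 2` matrix; its
trace is `44q` and its determinant `-16q²`.
-/

section BlockAntidiagonal

variable {R m n : Type*} [CommRing R] [Fintype m] [DecidableEq m] [Fintype n] [DecidableEq n]

theorem scalar_mul_eq_mul_scalar {S : Type*} [CommSemiring S] (r : S) (A : Matrix m n S) :
    Matrix.scalar m r * A = A * Matrix.scalar n r := by
  ext i j
  simp [mul_comm]

theorem expand_charpoly (k : ℕ) (N : Matrix n n R) :
    expand R k N.charpoly = (Matrix.scalar n (X ^ k) - N.map C).det := by
  rw [Matrix.charpoly, AlgHom.map_det]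
  congr 1
  ext1 i j
  simp [Matrix.charmatrix_apply, Matrix.diagonal_apply, apply_ite (expand R k)]

theorem X_pow_card_mul_charpoly_fromBlocks_antidiagonal (A : Matrix m n R) (B : Matrix n m R) :
    X ^ Fintype.card n * (Matrix.fromBlocks 0 A B 0).charpoly =
      X ^ Fintype.card m * expand R 2 (B * A).charpoly := by
  let P : Matrix (m ⊕ n) (m ⊕ n) R[X] := (Matrix.fromBlocks 0 A B 0).charmatrix
  let Q : Matrix (m ⊕ n) (m ⊕ n) R[X] := Matrix.fromBlocks 1 (A.map C) 0 (Matrix.scalar n X)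
  have hPQ : P * Q = Matrix.fromBlocks (Matrix.scalar m X) 0 (-B.map C)
      (Matrix.scalar n (X ^ 2) - (B * A).map C) := by
    have hsq : Matrix.scalar n (X ^ 2 : R[X]) = Matrix.scalar n X * Matrix.scalar n X := by
      rw [sq, map_mul]
    simp only [P, Q, Matrix.charmatrix_fromBlocks, Matrix.charmatrix_zero,
      Matrix.fromBlocks_multiply, Matrix.mul_one, Matrix.mul_zero, add_zero, Matrix.neg_mul,
      neg_add_eq_sub, scalar_mul_eq_mul_scalar, add_neg_cancel, hsq, Matrix.map_mul]
  have hQ : Q.det = X ^ Fintype.card n := by simp [Q]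
  calc X ^ Fintype.card n * P.det
      = (P * Q).det := by rw [Matrix.det_mul, hQ, mul_comm]
    _ = X ^ Fintype.card m * expand R 2 (B * A).charpoly := by
        rw [hPQ, Matrix.det_fromBlocks_zero₁₂, ← expand_charpoly]
        simp

theorem charpoly_fromBlocks_antidiagonal_of_le (A : Matrix m n R) (B : Matrix n m R)
    (hle : Fintype.card n ≤ Fintype.card m) :
    (Matrix.fromBlocks 0 A B 0).charpoly =
      X ^ (Fintype.card m - Fintype.card n) * expand R 2 (B * A).charpoly := by
  rw [← (isRegular_X_pow (Fintype.card n)).left.eq_iff, ← mul_assoc, ← pow_add,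
    Nat.add_sub_cancel' hle, X_pow_card_mul_charpoly_fromBlocks_antidiagonal]

end BlockAntidiagonal

section GushelMukai

variable {R : Type*} [CommRing R]

/-- The matrix `M` over an arbitrary commutative ring, in the basis `σ₀, σ₁, σ₂, σ₁₁, σ₃, σ₃₁`. -/
def quantumHyperplaneMatrix (q : R) : Matrix (Fin 6) (Fin 6) R :=
  !![0, 6*q, 0,    0,   24*q^2, 0;
     1, 0,   10*q, 6*q, 0,      24*q^2;
     0, 1,   0,    0,   4*q,    0;
     0, 1,   0,    0,   2*q,    0;
     0, 0,   3,    2,   0,      6*q;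
     0, 0,   0,    0,   1,      0]

/-- The splitting of the basis by parity of codimension: the left summand enumerates the even
classes `σ₀, σ₂, σ₁₁, σ₃₁`, the right one the odd classes `σ₁, σ₃`. -/
noncomputable def parityEquiv : Fin 4 ⊕ Fin 2 ≃ Fin 6 :=
  Equiv.ofBijective (Sum.elim ![0, 2, 3, 5] ![1, 4]) (by decide)

/-- The block of `quantumHyperplaneMatrix q` sending odd classes to even ones. -/
def oddToEvenBlock (q : R) : Matrix (Fin 4) (Fin 2) R :=
  !![6*q, 24*q^2;
     1,   4*q;
     1,   2*q;
     0,   1]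

/-- The block of `quantumHyperplaneMatrix q` sending even classes to odd ones. -/
def evenToOddBlock (q : R) : Matrix (Fin 2) (Fin 4) R :=
  !![1, 10*q, 6*q, 24*q^2;
     0, 3,    2,   6*q]

theorem quantumHyperplaneMatrix_submatrix_parityEquiv (q : R) :
    (quantumHyperplaneMatrix q).submatrix parityEquiv parityEquiv =
      Matrix.fromBlocks 0 (oddToEvenBlock q) (evenToOddBlock q) 0 := by
  ext (i | i) (j | j) <;> fin_cases i <;> fin_cases j <;> rfl

theorem evenToOddBlock_mul_oddToEvenBlock (q : R) :
    evenToOddBlock q * oddToEvenBlock q = !![22*q, 100*q^2; 5, 22*q] := by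
  ext i j
  fin_cases i <;> fin_cases j <;>
    simp [evenToOddBlock, oddToEvenBlock, Matrix.mul_apply, Fin.sum_univ_four] <;> ring

theorem charpoly_evenToOddBlock_mul_oddToEvenBlock (q : R) :
    (evenToOddBlock q * oddToEvenBlock q).charpoly = X ^ 2 - C (44 * q) * X - C (16 * q ^ 2) := by
  nontriviality R
  have htrace : (evenToOddBlock q * oddToEvenBlock q).trace = 44 * q := by
    rw [evenToOddBlock_mul_oddToEvenBlock, Matrix.trace_fin_two_of]
    ring
  have hdet : (evenToOddBlock q * oddToEvenBlock q).det = -(16 * q ^ 2) := by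
    rw [evenToOddBlock_mul_oddToEvenBlock, Matrix.det_fin_two_of]
    ring
  rw [Matrix.charpoly_fin_two, htrace, hdet, C_neg, ← sub_eq_add_neg]

theorem charpoly_M_general (q : R) :
    (quantumHyperplaneMatrix q).charpoly =
      X ^ 6 - C (44 * q) * X ^ 4 - C (16 * q ^ 2) * X ^ 2 :=
  calc (quantumHyperplaneMatrix q).charpoly
      = (Matrix.fromBlocks 0 (oddToEvenBlock q) (evenToOddBlock q) 0).charpoly := by
        rw [← quantumHyperplaneMatrix_submatrix_parityEquiv]
        exact (Matrix.charpoly_reindex parityEquiv.symm _).symm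
    _ = X ^ 2 * expand R 2 (evenToOddBlock q * oddToEvenBlock q).charpoly :=
        charpoly_fromBlocks_antidiagonal_of_le _ _ (by decide)
    _ = X ^ 2 * ((X ^ 2) ^ 2 - C (44 * q) * X ^ 2 - C (16 * q ^ 2)) := by
        rw [charpoly_evenToOddBlock_mul_oddToEvenBlock]
        simp only [map_sub, map_mul, map_pow, expand_X, expand_C]
    _ = X ^ 6 - C (44 * q) * X ^ 4 - C (16 * q ^ 2) * X ^ 2 := by ring

end GushelMukai

theorem charpoly_M (q : ℂ) :
    (M q).charpoly = X ^ 6 - C (44 * q) * X ^ 4 - C (16 * q ^ 2) * X ^ 2 :=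
  charpoly_M_general q
end

section
/- Let q be a nonzero complex number and let M(q) be the 6×6 matrix with rows (0, 6q, 0, 0, 24q², 0), (1, 0, 10q, 6q, 0, 24q²), (0, 1, 0, 0, 4q, 0), (0, 1, 0, 0, 2q, 0), (0, 0, 3, 2, 0, 6q), (0, 0, 0, 0, 1, 0), viewed as a linear endomorphism of ℂ⁶. Then the kernel of M(q) is two-dimensional, and it is precisely the span of the two vectors v_α = (−2q, 0, 2, −3, 0, 0) and v_β = (−4q², 0, −2q, 0, 0, 1). -/
/-- Coordinate vector of α = 2σ₂ − 3σ₁₁ − 2q. -/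
noncomputable def vα (q : ℂ) : Fin 6 → ℂ := ![-(2*q), 0, 2, -3, 0, 0]

/-- Coordinate vector of β = 2·pt − 2qσ₂ − 4q². -/
noncomputable def vβ (q : ℂ) : Fin 6 → ℂ := ![-(4*q^2), 0, -(2*q), 0, 0, 1]

open Matrix

theorem finrank_span_pair {R V : Type*} [Semiring R] [Nontrivial R] [StrongRankCondition R]
    [AddCommMonoid V] [Module R V] {v w : V} (h : LinearIndependent R ![v, w]) :
    Module.finrank R (Submodule.span R {v, w}) = 2 := by
  rw [← range_cons_cons_empty v w ![], finrank_span_eq_card h, Fintype.card_fin]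

theorem M_mulVec (q : ℂ) (x : Fin 6 → ℂ) :
    M q *ᵥ x =
      ![6 * q * x 1 + 24 * q ^ 2 * x 4,
        x 0 + 10 * q * x 2 + 6 * q * x 3 + 24 * q ^ 2 * x 5,
        x 1 + 4 * q * x 4,
        x 1 + 2 * q * x 4,
        3 * x 2 + 2 * x 3 + 6 * q * x 5,
        x 4] := by
  ext i
  fin_cases i <;> simp [M, mulVec, dotProduct, Fin.sum_univ_succ] <;> ring

theorem M_mulVec_vα (q : ℂ) : M q *ᵥ vα q = 0 := by
  rw [M_mulVec]
  ext i
  fin_cases i <;> simp [vα] <;> ring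

theorem M_mulVec_vβ (q : ℂ) : M q *ᵥ vβ q = 0 := by
  rw [M_mulVec]
  ext i
  fin_cases i <;> simp [vβ] <;> ring

theorem smul_vα_add_smul_vβ (q a b : ℂ) :
    a • vα q + b • vβ q =
      ![-(2 * q * a) - 4 * q ^ 2 * b, 0, 2 * a - 2 * q * b, -(3 * a), 0, b] := by
  ext i
  fin_cases i <;> simp [vα, vβ] <;> ring

/- A kernel vector is determined by its coordinates `3` and `5`, which for `a • vα q + b • vβ q`
are `-(3 * a)` and `b`: this dictates the coefficients. -/
theorem smul_vα_add_smul_vβ_eq_of_M_mulVec_eq_zero {q : ℂ} {x : Fin 6 → ℂ}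
    (hx : M q *ᵥ x = 0) : (-(x 3 / 3)) • vα q + x 5 • vβ q = x := by
  rw [M_mulVec] at hx
  have row₁ : x 0 + 10 * q * x 2 + 6 * q * x 3 + 24 * q ^ 2 * x 5 = 0 := congrFun hx 1
  have row₃ : x 1 + 2 * q * x 4 = 0 := congrFun hx 3
  have row₄ : 3 * x 2 + 2 * x 3 + 6 * q * x 5 = 0 := congrFun hx 4
  have hx₄ : x 4 = 0 := congrFun hx 5
  have hx₁ : x 1 = 0 := by linear_combination row₃ - 2 * q * hx₄
  have hx₂ : x 2 = -(2 / 3) * x 3 - 2 * q * x 5 := by linear_combination row₄ / 3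
  have hx₀ : x 0 = 2 / 3 * q * x 3 - 4 * q ^ 2 * x 5 := by
    linear_combination row₁ - 10 * q * hx₂
  rw [smul_vα_add_smul_vβ]
  ext i
  fin_cases i <;> simp [hx₀, hx₁, hx₂, hx₄] <;> ring

theorem ker_M_eq_span (q : ℂ) :
    LinearMap.ker (M q).mulVecLin = Submodule.span ℂ {vα q, vβ q} := by
  apply le_antisymm
  · intro x hx
    exact Submodule.mem_span_pair.mpr
      ⟨_, _, smul_vα_add_smul_vβ_eq_of_M_mulVec_eq_zero hx⟩
  · rw [Submodule.span_le, Set.pair_subset_iff]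
    exact ⟨M_mulVec_vα q, M_mulVec_vβ q⟩

theorem linearIndependent_vα_vβ (q : ℂ) : LinearIndependent ℂ ![vα q, vβ q] := by
  rw [LinearIndependent.pair_iff]
  intro a b h
  rw [smul_vα_add_smul_vβ] at h
  have ha : -(3 * a) = 0 := congrFun h 3
  have hb : b = 0 := congrFun h 5
  exact ⟨by linear_combination -ha / 3, hb⟩

theorem ker_M (q : ℂ) (hq : q ≠ 0) :
    Module.finrank ℂ (LinearMap.ker (M q).mulVecLin) = 2 ∧
    LinearMap.ker (M q).mulVecLin = Submodule.span ℂ {vα q, vβ q} := by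
  refine ⟨?_, ker_M_eq_span q⟩
  rw [ker_M_eq_span]
  exact finrank_span_pair (linearIndependent_vα_vβ q)
end

section
/- Let q be a nonzero complex number and let M(q) be the 6×6 matrix with rows (0, 6q, 0, 0, 24q², 0), (1, 0, 10q, 6q, 0, 24q²), (0, 1, 0, 0, 4q, 0), (0, 1, 0, 0, 2q, 0), (0, 0, 3, 2, 0, 6q), (0, 0, 0, 0, 1, 0), viewed as a linear endomorphism of ℂ⁶. Then M(q) is diagonalizable, the set of its nonzero eigenvalues equals the set of complex numbers λ satisfying λ⁴ = 44q·λ² + 16q², this set has exactly four elements, the eigenspace of each nonzero eigenvalue is one-dimensional, and the eigenspace of the eigenvalue 0 is two-dimensional. -/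
/-!
Diagonalizability is a dimension count. Solving `M q *ᵥ v = μ • v` from the last coordinate upwards
determines `v` by `v 5` when `μ ≠ 0`, and the one equation left over is the quartic in `μ`; so each
nonzero root contributes one dimension. The quartic is a quadratic in `μ ^ 2` whose roots are
distinct and nonzero for `q ≠ 0`, hence it has four roots, all nonzero. Together with the two
dimensions of the kernel this gives `4 + 2 = 6`.
-/

open Module Module.End

section DimensionCount

variable {K V : Type*} [AddCommGroup V]

theorem finrank_finset_sup_eq_sum [DivisionRing K] [Module K V] {ι : Type*} {s : Finset ι}
    {p : ι → Submodule K V} [∀ i, FiniteDimensional K (p i)] (hs : s.SupIndep p) :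
    finrank K ↥(s.sup p) = ∑ i ∈ s, finrank K (p i) := by
  classical
  induction s using Finset.induction_on with
  | empty => simp
  | insert i t hi ih =>
    have hdisj : Disjoint (p i) (t.sup p) :=
      hs (Finset.subset_insert i t) (Finset.mem_insert_self i t) hi
    have hdim := Submodule.finrank_sup_add_finrank_inf_eq (p i) (t.sup p)
    rw [hdisj.eq_bot, finrank_bot, add_zero] at hdim
    rw [Finset.sup_insert, hdim, ih (hs.subset (Finset.subset_insert i t)), Finset.sum_insert hi]

theorem iSup_eigenspace_eq_top_of_finrank_le_sum [Field K] [Module K V] [FiniteDimensional K V]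
    (f : End K V) (s : Finset K) (h : finrank K V ≤ ∑ μ ∈ s, finrank K (f.eigenspace μ)) :
    ⨆ μ, f.eigenspace μ = ⊤ := by
  rw [← finrank_finset_sup_eq_sum (f.eigenspaces_iSupIndep.supIndep' s)] at h
  have hs : s.sup f.eigenspace = ⊤ :=
    Submodule.eq_top_of_finrank_eq ((Submodule.finrank_le _).antisymm h)
  exact top_le_iff.mp (hs ▸ Finset.sup_le fun μ _ ↦ le_iSup f.eigenspace μ)

end DimensionCount

section Biquadratic

variable {K : Type*} [Field K] [NeZero (2 : K)]

theorem ncard_neg_pairs_eq_four {x y : K} (hx : x ≠ 0) (hy : y ≠ 0) (hxy : x ^ 2 ≠ y ^ 2) :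
    ({x, -x, y, -y} : Set K).ncard = 4 := by
  classical
  have hne_neg {z : K} (hz : z ≠ 0) : z ≠ -z := by
    rw [ne_eq, eq_neg_iff_add_eq_zero, ← two_mul]
    exact mul_ne_zero two_ne_zero hz
  obtain ⟨hxy₁, hxy₂⟩ : x ≠ y ∧ x ≠ -y := by
    simpa [sq_eq_sq_iff_eq_or_eq_neg, not_or] using hxy
  rw [Set.ncard_eq_toFinset_card']
  simp [hne_neg hx, hne_neg hy, hxy₁, hxy₂, neg_eq_iff_eq_neg]

theorem ncard_biquadratic_roots_eq_four [IsAlgClosed K] {b c : K} (hc : c ≠ 0)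
    (hdisc : b ^ 2 + 4 * c ≠ 0) : {z : K | z ^ 4 = b * z ^ 2 + c}.ncard = 4 := by
  have h2 : (2 : K) ≠ 0 := two_ne_zero
  obtain ⟨s, hs⟩ := IsAlgClosed.exists_pow_nat_eq (b ^ 2 + 4 * c) two_pos
  obtain ⟨x, hx⟩ := IsAlgClosed.exists_pow_nat_eq ((b + s) / 2) two_pos
  obtain ⟨y, hy⟩ := IsAlgClosed.exists_pow_nat_eq ((b - s) / 2) two_pos
  have hsum : x ^ 2 + y ^ 2 = b := by rw [hx, hy]; field_simp; ring
  have hdiff : x ^ 2 - y ^ 2 = s := by rw [hx, hy]; field_simp; ring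
  have hprod : x ^ 2 * y ^ 2 = -c := by
    refine mul_left_cancel₀ (mul_ne_zero h2 h2) ?_
    linear_combination (x ^ 2 + y ^ 2 + b) * hsum - (x ^ 2 - y ^ 2 + s) * hdiff - hs
  have hfactor (z : K) : z ^ 4 = b * z ^ 2 + c ↔ (z ^ 2 - x ^ 2) * (z ^ 2 - y ^ 2) = 0 := by
    rw [← sub_eq_zero, ← hsum, ← neg_neg c, ← hprod]
    ring_nf
  have hroots : {z : K | z ^ 4 = b * z ^ 2 + c} = {x, -x, y, -y} := by
    ext z
    simp [hfactor, sub_eq_zero, sq_eq_sq_iff_eq_or_eq_neg, or_assoc]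
  obtain ⟨hx0, hy0⟩ : x ≠ 0 ∧ y ≠ 0 := by
    have hxy0 : x ^ 2 * y ^ 2 ≠ 0 := hprod ▸ neg_ne_zero.mpr hc
    simpa using hxy0
  have hs0 : s ≠ 0 := by
    rintro rfl
    exact hdisc (by simpa using hs.symm)
  rw [hroots]
  exact ncard_neg_pairs_eq_four hx0 hy0 (sub_ne_zero.mp (hdiff ▸ hs0))

end Biquadratic

namespace M

theorem mem_eigenspace_iff {q μ : ℂ} {v : Fin 6 → ℂ} :
    v ∈ eigenspace (M q).mulVecLin μ ↔
      6 * q * v 1 + 24 * q ^ 2 * v 4 = μ * v 0 ∧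
      v 0 + 10 * q * v 2 + 6 * q * v 3 + 24 * q ^ 2 * v 5 = μ * v 1 ∧
      v 1 + 4 * q * v 4 = μ * v 2 ∧
      v 1 + 2 * q * v 4 = μ * v 3 ∧
      3 * v 2 + 2 * v 3 + 6 * q * v 5 = μ * v 4 ∧
      v 4 = μ * v 5 := by
  rw [Module.End.mem_eigenspace_iff, funext_iff]
  simp [Fin.forall_fin_succ, M, Matrix.mulVec, dotProduct, Fin.sum_univ_succ, Fin.succ, ← add_assoc]

/-- The candidate eigenvector of `M q` for a nonzero eigenvalue `μ`, normalized to have last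
coordinate `1`. It satisfies every equation of `M q *ᵥ v = μ • v` except possibly the one in
coordinate `1`. -/
noncomputable def eigenvector (q μ : ℂ) : Fin 6 → ℂ :=
  ![(6 * q * μ ^ 2 - 12 * q ^ 2) / 5, μ * (μ ^ 2 - 22 * q) / 5, (μ ^ 2 - 2 * q) / 5,
    (μ ^ 2 - 12 * q) / 5, μ, 1]

theorem eigenvector_ne_zero (q μ : ℂ) : eigenvector q μ ≠ 0 :=
  fun h ↦ one_ne_zero (congrFun h 5)

theorem eigenvector_mem_eigenspace_iff {q μ : ℂ} :
    eigenvector q μ ∈ eigenspace (M q).mulVecLin μ ↔ μ ^ 4 = 44 * q * μ ^ 2 + 16 * q ^ 2 := by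
  simp only [mem_eigenspace_iff, eigenvector, Matrix.cons_val]
  constructor
  · rintro ⟨-, h, -⟩
    linear_combination -5 * h
  · intro h
    exact ⟨by ring, by linear_combination (-h) / 5, by ring, by ring, by ring, by ring⟩

theorem eq_smul_eigenvector {q μ : ℂ} (hμ : μ ≠ 0) {v : Fin 6 → ℂ}
    (hv : v ∈ eigenspace (M q).mulVecLin μ) : v = v 5 • eigenvector q μ := by
  obtain ⟨h0, -, h2, h3, h4, h5⟩ := mem_eigenspace_iff.mp hv
  have h23 : v 2 = v 3 + 2 * q * v 5 := by
    apply mul_left_cancel₀ hμ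
    linear_combination h3 - h2 + 2 * q * h5
  have e3 : v 3 = v 5 * ((μ ^ 2 - 12 * q) / 5) := by
    linear_combination (h4 + μ * h5 - 3 * h23) / 5
  have e2 : v 2 = v 5 * ((μ ^ 2 - 2 * q) / 5) := by
    linear_combination h23 + e3
  have e1 : v 1 = v 5 * (μ * (μ ^ 2 - 22 * q) / 5) := by
    linear_combination h3 + μ * e3 - 2 * q * h5
  have e0 : v 0 = v 5 * ((6 * q * μ ^ 2 - 12 * q ^ 2) / 5) := by
    apply mul_left_cancel₀ hμ
    linear_combination -h0 + 6 * q * e1 + 24 * q ^ 2 * h5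
  have e4 : v 4 = v 5 * μ := h5.trans (mul_comm μ (v 5))
  have e5 : v 5 = v 5 * 1 := (mul_one (v 5)).symm
  ext i
  fin_cases i
  exacts [e0, e1, e2, e3, e4, e5]

theorem hasEigenvalue_iff {q μ : ℂ} (hμ : μ ≠ 0) :
    HasEigenvalue (M q).mulVecLin μ ↔ μ ^ 4 = 44 * q * μ ^ 2 + 16 * q ^ 2 := by
  rw [← eigenvector_mem_eigenspace_iff]
  constructor
  · intro h
    obtain ⟨v, hv, hv0⟩ := h.exists_hasEigenvector
    have hvw := eq_smul_eigenvector hμ hv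
    have hv5 : v 5 ≠ 0 := fun h5 ↦ hv0 (by rw [hvw, h5, zero_smul])
    rwa [hvw, Submodule.smul_mem_iff _ hv5] at hv
  · intro h
    exact hasEigenvalue_of_hasEigenvector ⟨h, eigenvector_ne_zero q μ⟩

theorem eigenspace_eq_span {q μ : ℂ} (hμ : μ ≠ 0) (h : HasEigenvalue (M q).mulVecLin μ) :
    eigenspace (M q).mulVecLin μ = ℂ ∙ eigenvector q μ := by
  refine le_antisymm (fun v hv ↦ ?_) ?_
  · exact Submodule.mem_span_singleton.mpr ⟨v 5, (eq_smul_eigenvector hμ hv).symm⟩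
  · rw [Submodule.span_singleton_le_iff_mem, eigenvector_mem_eigenspace_iff]
    exact (hasEigenvalue_iff hμ).mp h

theorem finrank_eigenspace_eq_one {q μ : ℂ} (hμ : μ ≠ 0) (h : HasEigenvalue (M q).mulVecLin μ) :
    finrank ℂ (eigenspace (M q).mulVecLin μ) = 1 := by
  rw [eigenspace_eq_span hμ h, finrank_span_singleton (eigenvector_ne_zero q μ)]

theorem eigenspace_zero_eq_span (q : ℂ) :
    eigenspace (M q).mulVecLin 0 =
      Submodule.span ℂ (Set.range
        ![![-2 * q, 0, 2, -3, 0, 0], ![-6 * q ^ 2, 0, 0, -3 * q, 0, 1]]) := by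
  ext v
  rw [mem_eigenspace_iff, Matrix.range_cons_cons_empty, Submodule.mem_span_pair]
  constructor
  · rintro ⟨-, h1, -, h3, h4, h5⟩
    have e0 : v 2 / 2 * (-2 * q) + v 5 * (-6 * q ^ 2) = v 0 := by
      linear_combination 3 * q * h4 - h1
    have e1 : 0 = v 1 := by linear_combination 2 * q * h5 - h3
    have e3 : v 2 / 2 * -3 + v 5 * (-3 * q) = v 3 := by linear_combination -h4 / 2
    have e4 : 0 = v 4 := by linear_combination -h5
    refine ⟨v 2 / 2, v 5, ?_⟩
    ext i
    fin_cases i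
    · simpa using e0
    · simpa using e1
    · simp
    · simpa using e3
    · simpa using e4
    · simp
  · rintro ⟨a, b, rfl⟩
    simp only [Pi.add_apply, Pi.smul_apply, smul_eq_mul, Matrix.cons_val]
    exact ⟨by ring, by ring, by ring, by ring, by ring, by ring⟩

theorem finrank_eigenspace_zero (q : ℂ) : finrank ℂ (eigenspace (M q).mulVecLin 0) = 2 := by
  have hli : LinearIndependent ℂ
      ![![-2 * q, 0, 2, -3, 0, 0], ![-6 * q ^ 2, 0, 0, -3 * q, 0, 1]] := by
    refine LinearIndependent.pair_iff.mpr fun s t h ↦ ⟨?_, ?_⟩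
    · simpa using congrFun h 2
    · simpa using congrFun h 5
  rw [eigenspace_zero_eq_span, finrank_span_eq_card hli, Fintype.card_fin]

theorem setOf_hasEigenvalue_ne_zero {q : ℂ} (hq : q ≠ 0) :
    {μ : ℂ | μ ≠ 0 ∧ HasEigenvalue (M q).mulVecLin μ} =
      {μ : ℂ | μ ^ 4 = 44 * q * μ ^ 2 + 16 * q ^ 2} := by
  ext μ
  rcases eq_or_ne μ 0 with rfl | hμ
  · simp [hq]
  · simp [hμ, hasEigenvalue_iff hμ]

theorem ncard_quartic_roots_eq_four {q : ℂ} (hq : q ≠ 0) :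
    {μ : ℂ | μ ^ 4 = 44 * q * μ ^ 2 + 16 * q ^ 2}.ncard = 4 := by
  have hdisc : (44 * q) ^ 2 + 4 * (16 * q ^ 2) = 2000 * q ^ 2 := by ring
  exact ncard_biquadratic_roots_eq_four (by simp [hq]) (by simp [hdisc, hq])

theorem iSup_eigenspace_eq_top {q : ℂ} (hq : q ≠ 0) :
    ⨆ μ, eigenspace (M q).mulVecLin μ = ⊤ := by
  have hfin : {μ : ℂ | μ ^ 4 = 44 * q * μ ^ 2 + 16 * q ^ 2}.Finite :=
    Set.finite_of_ncard_ne_zero (by simp [ncard_quartic_roots_eq_four hq])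
  obtain ⟨s, hs⟩ := hfin.exists_finset_coe
  have hcard : s.card = 4 := by rw [← Set.ncard_coe_finset, hs, ncard_quartic_roots_eq_four hq]
  have hmem {μ : ℂ} (hμ : μ ∈ s) : μ ≠ 0 ∧ HasEigenvalue (M q).mulVecLin μ := by
    rwa [← Finset.mem_coe, hs, ← setOf_hasEigenvalue_ne_zero hq] at hμ
  have hzero : 0 ∉ s := fun h ↦ (hmem h).1 rfl
  have hone : ∀ μ ∈ s, finrank ℂ (eigenspace (M q).mulVecLin μ) = 1 :=
    fun μ hμ ↦ finrank_eigenspace_eq_one (hmem hμ).1 (hmem hμ).2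
  refine iSup_eigenspace_eq_top_of_finrank_le_sum _ (insert 0 s) ?_
  rw [Finset.sum_insert hzero, finrank_eigenspace_zero, Finset.sum_congr rfl hone]
  simp [hcard]

end M

theorem M_diagonalizable_and_eigenvalues (q : ℂ) (hq : q ≠ 0) :
    (⨆ μ : ℂ, Module.End.eigenspace (M q).mulVecLin μ) = ⊤ ∧
    {μ : ℂ | μ ≠ 0 ∧ Module.End.HasEigenvalue (M q).mulVecLin μ} =
      {μ : ℂ | μ ^ 4 = 44 * q * μ ^ 2 + 16 * q ^ 2} ∧
    Set.ncard {μ : ℂ | μ ^ 4 = 44 * q * μ ^ 2 + 16 * q ^ 2} = 4 ∧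
    (∀ μ : ℂ, μ ≠ 0 → Module.End.HasEigenvalue (M q).mulVecLin μ →
      Module.finrank ℂ (Module.End.eigenspace (M q).mulVecLin μ) = 1) ∧
    Module.finrank ℂ (Module.End.eigenspace (M q).mulVecLin 0) = 2 :=
  ⟨M.iSup_eigenspace_eq_top hq, M.setOf_hasEigenvalue_ne_zero hq, M.ncard_quartic_roots_eq_four hq,
    fun _ ↦ M.finrank_eigenspace_eq_one, M.finrank_eigenspace_zero q⟩
end

section
/- Let q be a nonzero complex number and let M(q) be the 6×6 matrix with rows (0, 6q, 0, 0, 24q², 0), (1, 0, 10q, 6q, 0, 24q²), (0, 1, 0, 0, 4q, 0), (0, 1, 0, 0, 2q, 0), (0, 0, 3, 2, 0, 6q), (0, 0, 0, 0, 1, 0). Then the minimal polynomial of M(q) over ℂ equals X⁵ − 44q·X³ − 16q²·X; in particular ker(M(q)²) = ker(M(q)). -/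
/-!
The unit class generates a cyclic subspace with basis `1, h, h², h³, h⁴` (quantum powers of the
hyperplane class `h`), and `h⁵ = 44q h³ + 16q² h`. A sixth class killed by `M q` completes these
to a basis of `ℂ⁶`. As `X` divides the resulting relation, the relation annihilates `M q`, and by
independence of the powers no nonzero polynomial of smaller degree does. For `q ≠ 0` the root `0`
of the relation is simple, so a Bézout identity gives `ker (M q ^ n) = ker (M q)` for all `n ≥ 1`.
-/

open Polynomial

section Endomorphism

variable {R V : Type*} [CommSemiring R] [AddCommMonoid V] [Module R V] {f : Module.End R V}
  {p : R[X]}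

theorem ker_aeval_pow_eq_ker_aeval_of_isCoprime {g : R[X]} (hpg : IsCoprime p g)
    (hf : aeval f (p * g) = 0) {n : ℕ} (hn : n ≠ 0) :
    LinearMap.ker (aeval f p ^ n) = LinearMap.ker (aeval f p) := by
  refine le_antisymm (fun v hv ↦ ?_) fun v hv ↦ ?_
  · obtain ⟨a, b, hab⟩ := hpg.pow_left (m := n)
    have bezout : p * a * p ^ n + b * (p * g) = p := by
      calc p * a * p ^ n + b * (p * g) = p * (a * p ^ n + b * g) := by ring
        _ = p := by rw [hab, mul_one]
    have hp : aeval f p = aeval f (p * a) * aeval f p ^ n := by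
      calc aeval f p = aeval f (p * a * p ^ n + b * (p * g)) := by rw [bezout]
        _ = aeval f (p * a) * aeval f p ^ n := by
            rw [map_add, map_mul _ b, hf, mul_zero, add_zero, map_mul, map_pow]
    rw [LinearMap.mem_ker] at hv ⊢
    rw [hp, Module.End.mul_apply, hv, map_zero]
  · obtain ⟨m, rfl⟩ := Nat.exists_eq_succ_of_ne_zero hn
    rw [LinearMap.mem_ker] at hv ⊢
    rw [pow_succ, Module.End.mul_apply, hv, map_zero]

theorem aeval_apply_pow_apply_eq_zero {v : V} (hv : aeval f p v = 0) (n : ℕ) :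
    aeval f p ((f ^ n) v) = 0 := by
  have hcomm : Commute (aeval f p) (f ^ n) := by
    simpa only [map_pow, aeval_X] using (Commute.all p (X ^ n)).map (aeval f)
  rw [← Module.End.mul_apply, hcomm.eq, Module.End.mul_apply, hv, map_zero]

end Endomorphism

section CyclicVector

theorem le_natDegree_of_linearIndependent_pow_apply {R V : Type*} [CommRing R] [AddCommGroup V]
    [Module R V] {f : Module.End R V} {v : V} {n : ℕ}
    (hv : LinearIndependent R fun i : Fin n ↦ (f ^ (i : ℕ)) v) {p : R[X]} (hp : p ≠ 0)
    (hpv : aeval f p v = 0) : n ≤ p.natDegree := by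
  by_contra! hlt
  have hsum : ∑ i : Fin n, p.coeff i • (f ^ (i : ℕ)) v = 0 := by
    rw [← hpv, aeval_eq_sum_range' hlt, ← Fin.sum_univ_eq_sum_range (fun i ↦ p.coeff i • f ^ i) n,
      LinearMap.sum_apply]
    rfl
  exact hp <| leadingCoeff_eq_zero.mp <|
    Fintype.linearIndependent_iff.mp hv _ hsum ⟨p.natDegree, hlt⟩

theorem minpoly_eq_of_linearIndependent_pow_apply {K V : Type*} [Field K] [AddCommGroup V]
    [Module K V] {f : Module.End K V} {p : K[X]} (hp : p.Monic) (hf : aeval f p = 0) {v : V}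
    (hv : LinearIndependent K fun i : Fin p.natDegree ↦ (f ^ (i : ℕ)) v) : minpoly K f = p := by
  refine (minpoly.unique K f hp hf fun r hr hfr ↦ ?_).symm
  rw [degree_eq_natDegree hp.ne_zero, degree_eq_natDegree hr.ne_zero, Nat.cast_le]
  exact le_natDegree_of_linearIndependent_pow_apply hv hr.ne_zero (by rw [hfr]; rfl)

end CyclicVector

section GushelMukai

/-- The relation satisfied by the hyperplane class in small quantum cohomology. -/
noncomputable def quantumRelation (q : ℂ) : ℂ[X] :=
  X ^ 5 - C (44 * q) * X ^ 3 - C (16 * q ^ 2) * X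

/-- The quantum powers `1, h, h², h³, h⁴` of the hyperplane class, in the basis in which `M q` is
written; its first vector is the unit class. -/
noncomputable def quantumPower (q : ℂ) : Fin 5 → Fin 6 → ℂ :=
  ![![1, 0, 0, 0, 0, 0],
    ![0, 1, 0, 0, 0, 0],
    ![6 * q, 0, 1, 1, 0, 0],
    ![0, 22 * q, 0, 0, 5, 0],
    ![252 * q ^ 2, 0, 42 * q, 32 * q, 0, 5]]

/-- A class annihilated by the hyperplane class, outside the span of the quantum powers. -/
noncomputable def kernelClass (q : ℂ) : Fin 6 → ℂ :=
  ![-2 * q, 0, 2, -3, 0, 0]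

variable (q : ℂ)

theorem toLin'_M_apply (v : Fin 6 → ℂ) :
    Matrix.toLin' (M q) v =
      ![6 * q * v 1 + 24 * q ^ 2 * v 4,
        v 0 + 10 * q * v 2 + 6 * q * v 3 + 24 * q ^ 2 * v 5,
        v 1 + 4 * q * v 4,
        v 1 + 2 * q * v 4,
        3 * v 2 + 2 * v 3 + 6 * q * v 5,
        v 4] := by
  ext i
  fin_cases i <;> simp [M, Matrix.mulVec, dotProduct, Fin.sum_univ_six]

theorem toLin'_M_quantumPower_castSucc (i : Fin 4) :
    Matrix.toLin' (M q) (quantumPower q i.castSucc) = quantumPower q i.succ := by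
  rw [toLin'_M_apply]
  fin_cases i <;> ext j <;> fin_cases j <;> simp [quantumPower] <;> ring

theorem toLin'_M_quantumPower_four :
    Matrix.toLin' (M q) (quantumPower q 4) =
      (44 * q) • quantumPower q 3 + (16 * q ^ 2) • quantumPower q 1 := by
  rw [toLin'_M_apply]
  ext j
  fin_cases j <;> simp [quantumPower] <;> ring

theorem toLin'_M_kernelClass : Matrix.toLin' (M q) (kernelClass q) = 0 := by
  rw [toLin'_M_apply]
  ext j
  fin_cases j <;> simp [kernelClass] <;> ring

theorem toLin'_M_pow_apply_unit (i : Fin 5) :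
    (Matrix.toLin' (M q) ^ (i : ℕ)) (quantumPower q 0) = quantumPower q i := by
  induction i using Fin.induction with
  | zero => rfl
  | succ i ih =>
    rw [Fin.val_succ, pow_succ', Module.End.mul_apply, ← Fin.val_castSucc, ih,
      toLin'_M_quantumPower_castSucc]

theorem linearIndependent_snoc_quantumPower_kernelClass :
    LinearIndependent ℂ (Fin.snoc (quantumPower q) (kernelClass q) : Fin 6 → Fin 6 → ℂ) := by
  rw [Fintype.linearIndependent_iff]
  intro c hc
  rw [Fin.sum_univ_castSucc] at hc
  simp only [Fin.snoc_castSucc, Fin.snoc_last] at hc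
  have coord (j : Fin 6) : ∑ i : Fin 5, c i.castSucc * quantumPower q i j
      + c 5 * kernelClass q j = 0 := by
    simpa using congrFun hc j
  simp only [Fin.sum_univ_five, quantumPower, kernelClass] at coord
  have h4 : c 4 = 0 := by simpa using coord 5
  have h3 : c 3 = 0 := by simpa using coord 4
  have h25 : c 2 + c 5 * 2 = 0 := by simpa [h4] using coord 2
  have h25' : c 2 - c 5 * 3 = 0 := by simpa [h4, sub_eq_add_neg] using coord 3
  have h5 : c 5 = 0 := by linear_combination (h25 - h25') / 5
  have h2 : c 2 = 0 := by simpa [h5] using h25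
  have h1 : c 1 = 0 := by simpa [h3] using coord 1
  have h0 : c 0 = 0 := by simpa [h2, h4, h5] using coord 0
  exact fun i ↦ by fin_cases i <;> assumption

theorem linearIndependent_quantumPower : LinearIndependent ℂ (quantumPower q) := by
  simpa [Function.comp_def] using
    (linearIndependent_snoc_quantumPower_kernelClass q).comp _ (Fin.castSucc_injective 5)

theorem span_snoc_quantumPower_kernelClass :
    Submodule.span ℂ (Set.range
      (Fin.snoc (quantumPower q) (kernelClass q) : Fin 6 → Fin 6 → ℂ)) = ⊤ :=
  (linearIndependent_snoc_quantumPower_kernelClass q).span_eq_top_of_card_eq_finrank' (by simp)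

theorem natDegree_quantumRelation : (quantumRelation q).natDegree = 5 := by
  unfold quantumRelation
  compute_degree!

theorem monic_quantumRelation : (quantumRelation q).Monic := by
  unfold quantumRelation
  monicity!

theorem quantumRelation_eq_X_mul :
    quantumRelation q = X * (X ^ 4 - C (44 * q) * X ^ 2 - C (16 * q ^ 2)) := by
  unfold quantumRelation
  ring

theorem aeval_quantumRelation_apply_unit :
    aeval (Matrix.toLin' (M q)) (quantumRelation q) (quantumPower q 0) = 0 := by
  have h1 : Matrix.toLin' (M q) (quantumPower q 0) = quantumPower q 1 :=
    toLin'_M_pow_apply_unit q 1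
  have h3 : (Matrix.toLin' (M q) ^ 3) (quantumPower q 0) = quantumPower q 3 :=
    toLin'_M_pow_apply_unit q 3
  have h4 : (Matrix.toLin' (M q) ^ 4) (quantumPower q 0) = quantumPower q 4 :=
    toLin'_M_pow_apply_unit q 4
  have h5 : (Matrix.toLin' (M q) ^ 5) (quantumPower q 0) =
      (44 * q) • quantumPower q 3 + (16 * q ^ 2) • quantumPower q 1 := by
    rw [pow_succ', Module.End.mul_apply, h4, toLin'_M_quantumPower_four]
  simp only [quantumRelation, ← smul_eq_C_mul, map_sub, map_smul, map_pow, aeval_X,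
    LinearMap.sub_apply, LinearMap.smul_apply, h1, h3, h5]
  abel

theorem aeval_toLin'_M_quantumRelation :
    aeval (Matrix.toLin' (M q)) (quantumRelation q) = 0 := by
  refine LinearMap.ext_on_range (span_snoc_quantumPower_kernelClass q) fun i ↦ ?_
  rw [LinearMap.zero_apply]
  induction i using Fin.lastCases with
  | last =>
    rw [Fin.snoc_last, quantumRelation_eq_X_mul, mul_comm, map_mul, aeval_X,
      Module.End.mul_apply, toLin'_M_kernelClass, map_zero]
  | cast i =>
    rw [Fin.snoc_castSucc, ← toLin'_M_pow_apply_unit]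
    exact aeval_apply_pow_apply_eq_zero (aeval_quantumRelation_apply_unit q) i

theorem minpoly_toLin'_M : minpoly ℂ (Matrix.toLin' (M q)) = quantumRelation q := by
  refine minpoly_eq_of_linearIndependent_pow_apply (v := quantumPower q 0)
    (monic_quantumRelation q) (aeval_toLin'_M_quantumRelation q) ?_
  rw [natDegree_quantumRelation]
  simpa only [toLin'_M_pow_apply_unit] using linearIndependent_quantumPower q

variable {q} in
theorem ker_toLin'_M_pow (hq : q ≠ 0) {n : ℕ} (hn : n ≠ 0) :
    LinearMap.ker (Matrix.toLin' (M q) ^ n) = LinearMap.ker (Matrix.toLin' (M q)) := by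
  have hcop : IsCoprime X (X ^ 4 - C (44 * q) * X ^ 2 - C (16 * q ^ 2)) := by
    rw [irreducible_X.coprime_iff_not_dvd, X_dvd_iff]
    simpa [coeff_zero_eq_eval_zero] using hq
  simpa only [aeval_X] using ker_aeval_pow_eq_ker_aeval_of_isCoprime hcop
    (quantumRelation_eq_X_mul q ▸ aeval_toLin'_M_quantumRelation q) hn

end GushelMukai

theorem minpoly_M (q : ℂ) (hq : q ≠ 0) :
    minpoly ℂ (M q) = X ^ 5 - C (44 * q) * X ^ 3 - C (16 * q ^ 2) * X ∧
    LinearMap.ker ((M q) ^ 2).mulVecLin = LinearMap.ker (M q).mulVecLin := by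
  constructor
  · rw [← Matrix.minpoly_toLin', minpoly_toLin'_M, quantumRelation]
  · rw [← Matrix.toLin'_apply', ← Matrix.toLin'_apply', Matrix.toLin'_pow]
    exact ker_toLin'_M_pow hq two_ne_zero
end

section
/- Let R be the commutative ring ℚ[h, H, α]/(h², H³ − αh − 2αH + hH², α² − αhH − αH²). Then in R the identities α²h = αhH², α²H = −αhH², and (α + hH)(4hH² + 8αh + 4αH) = 12·αhH² hold. -/
open MvPolynomial

/-- The ideal (h², H³ − αh − 2αH + hH², α² − αhH − αH²) in ℚ[h, H, α],
with h = X 0, H = X 1, α = X 2, encoding the intersection theory of the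
fivefold Σ = G(2, V₅/𝒪(−1)) over ℙ¹. -/
noncomputable def sigmaIdeal : Ideal (MvPolynomial (Fin 3) ℚ) :=
  Ideal.span
    { (X 0 : MvPolynomial (Fin 3) ℚ) ^ 2,
      (X 1 : MvPolynomial (Fin 3) ℚ) ^ 3 - X 2 * X 0 - 2 * X 2 * X 1 + X 0 * (X 1) ^ 2,
      (X 2 : MvPolynomial (Fin 3) ℚ) ^ 2 - X 2 * X 0 * X 1 - X 2 * (X 1) ^ 2 }

/-- The intersection ring of Σ. -/
abbrev CohSigma : Type := MvPolynomial (Fin 3) ℚ ⧸ sigmaIdeal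

/-- The class of h. -/
noncomputable def hS : CohSigma := Ideal.Quotient.mk sigmaIdeal (X 0)

/-- The class of H. -/
noncomputable def HS : CohSigma := Ideal.Quotient.mk sigmaIdeal (X 1)

/-- The class of α. -/
noncomputable def aS : CohSigma := Ideal.Quotient.mk sigmaIdeal (X 2)

/-!
Multiplying `α² = αhH + αH²` by `h` kills the term containing `h²`, which gives `α²h = αhH²`.
Multiplying it by `H` and substituting for `H³` gives `α²H = α²h + 2α²H`, so `α²H = -α²h`.
In the triple product the class `αhH²` then has coefficient `8 - 4 + 4 + 4 = 12`, coming from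
`8α²h`, `4α²H`, `α · 4hH²` and `hH · 4αH`.
-/

theorem sq_mul_eq_mul_mul_sq {A : Type*} [CommSemiring A] {h H a : A} (h_sq : h ^ 2 = 0)
    (a_sq : a ^ 2 = a * h * H + a * H ^ 2) : a ^ 2 * h = a * h * H ^ 2 :=
  calc
    a ^ 2 * h = a * H * h ^ 2 + a * h * H ^ 2 := by rw [a_sq]; ring
    _ = a * h * H ^ 2 := by rw [h_sq, mul_zero, zero_add]

theorem sq_mul_eq_neg_sq_mul {A : Type*} [CommRing A] {h H a : A}
    (H_cube : H ^ 3 = a * h + 2 * a * H - h * H ^ 2)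
    (a_sq : a ^ 2 = a * h * H + a * H ^ 2) : a ^ 2 * H = -(a ^ 2 * h) := by
  have a_sq_mul_H : a ^ 2 * H = a ^ 2 * h + 2 * (a ^ 2 * H) :=
    calc
      a ^ 2 * H = a * h * H ^ 2 + a * H ^ 3 := by rw [a_sq]; ring
      _ = a ^ 2 * h + 2 * (a ^ 2 * H) := by rw [H_cube]; ring
  linear_combination -a_sq_mul_H

theorem add_mul_mul_eq_of_sq_eq_zero {A : Type*} [CommSemiring A] {h : A} (h_sq : h ^ 2 = 0)
    (H a : A) :
    (a + h * H) * (4 * h * H ^ 2 + 8 * a * h + 4 * a * H) =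
      8 * (a ^ 2 * h) + 4 * (a ^ 2 * H) + 8 * (a * h * H ^ 2) :=
  calc
    _ = 8 * (a ^ 2 * h) + 4 * (a ^ 2 * H) + 8 * (a * h * H ^ 2) +
          (4 * H ^ 3 + 8 * a * H) * h ^ 2 := by ring
    _ = _ := by rw [h_sq, mul_zero, add_zero]

theorem J12_computation_general {A : Type*} [CommRing A] {h H a : A} (h_sq : h ^ 2 = 0)
    (H_cube : H ^ 3 = a * h + 2 * a * H - h * H ^ 2)
    (a_sq : a ^ 2 = a * h * H + a * H ^ 2) :
    a ^ 2 * h = a * h * H ^ 2 ∧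
    a ^ 2 * H = -(a * h * H ^ 2) ∧
    (a + h * H) * (4 * h * H ^ 2 + 8 * a * h + 4 * a * H) = 12 * (a * h * H ^ 2) := by
  have a_sq_mul_h : a ^ 2 * h = a * h * H ^ 2 := sq_mul_eq_mul_mul_sq h_sq a_sq
  have a_sq_mul_H : a ^ 2 * H = -(a * h * H ^ 2) := by
    rw [sq_mul_eq_neg_sq_mul H_cube a_sq, a_sq_mul_h]
  refine ⟨a_sq_mul_h, a_sq_mul_H, ?_⟩
  rw [add_mul_mul_eq_of_sq_eq_zero h_sq, a_sq_mul_h, a_sq_mul_H]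
  ring

theorem hS_sq_eq_zero : hS ^ 2 = 0 :=
  Ideal.Quotient.eq_zero_iff_mem.mpr <| Ideal.subset_span <| by simp

theorem HS_cube : HS ^ 3 = aS * hS + 2 * aS * HS - hS * HS ^ 2 := by
  refine (Ideal.Quotient.mk_eq_mk_iff_sub_mem (X 1 ^ 3)
    (X 2 * X 0 + 2 * X 2 * X 1 - X 0 * X 1 ^ 2)).mpr <| Ideal.subset_span ?_
  right; left; ring

theorem aS_sq : aS ^ 2 = aS * hS * HS + aS * HS ^ 2 := by
  refine (Ideal.Quotient.mk_eq_mk_iff_sub_mem (X 2 ^ 2)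
    (X 2 * X 0 * X 1 + X 2 * X 1 ^ 2)).mpr <| Ideal.subset_span ?_
  right; right; exact sub_add_eq_sub_sub _ _ _

theorem J12_computation :
    aS ^ 2 * hS = aS * hS * HS ^ 2 ∧
    aS ^ 2 * HS = -(aS * hS * HS ^ 2) ∧
    (aS + hS * HS) * (4 * hS * HS ^ 2 + 8 * aS * hS + 4 * aS * HS) =
      12 * (aS * hS * HS ^ 2) :=
  J12_computation_general hS_sq_eq_zero HS_cube aS_sq
end
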